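/- arXiv:math-ph/0304020 — 3 statements merged into one kernel-verified Lean document; each statement's English description precedes it below -/
import Mathlib

section
/- Fix t > 0 and μ ∈ ℝ. Suppose p, q : ℕ → ℝ satisfy the initial conditions p(0) = 0 and q(0) = t · (d/ds)[ log( s^{−μ/2} I_μ(2√s) ) ] evaluated at s = t, together with the coupled recurrences p(N+1) = (q(N)²/t)(p(N) − 1) − μ q(N)/t + 1 and q(N+1) = −t/q(N) + (1+N)t/( q(N)( q(N)(p(N)−1) − μ ) + t ) for all N ≥ 0, with all denominators nonzero. Then for every N ≥ 1 with τ^{III'}[N](4t;μ) ≠ 0, one has τ^{III'}[N+1](4t;μ) · τ^{III'}[N−1](4t;μ) / (τ^{III'}[N](4t;μ))² = p(N). -/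
/-!
With `c = √t`, the numbers `a m = I_{μ+m}(2√t)`, `m ∈ ℤ`, satisfy the three-term recurrence
`c (a (k-1) - a (k+1)) = (μ + k) a k`. Regard them as the moments of a linear functional `L` on
Laurent polynomials, `L(z^m) = a m`. The recurrence is then the Pearson equation
`L(z f' + μ f + c (z - z⁻¹) f) = 0`, valid for every real `μ`.

Let `Φ_n`, `Φ*_n` be the Szegő polynomials of `L`, built from
`Φ_{n+1} = z Φ_n + r_{n+1} Φ*_n` and `Φ*_{n+1} = Φ*_n + r̄_{n+1} z Φ_n`, and let
`h_n = L(Φ_n z⁻ⁿ)` be their norms. Biorthogonality (`orthogonality`) gives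
`h_{n+1} = h_n (1 - r_{n+1} r̄_{n+1})`, and triangularity gives `τ_N = ∏_{j<N} h_j` (`det_toep`).
Hence `τ_{N+1} τ_{N-1} / τ_N² = h_N / h_{N-1} = 1 - r_N r̄_N`.

Expanding `(n+1) Φ_{n+1} - z Φ_{n+1}'` and `Φ*_{n+1}'` in `Φ*_n` and `Φ_n` by means of the Pearson
equation yields the discrete Painlevé II equation
`n r_n = -c (1 - r_n r̄_n) (r_{n+1} + r_{n-1})` and its analogue for `r̄`
(`ver_recurrence`, `verBar_recurrence`). Together they show that
`c (r̄_{n+1} r_n - r_{n+1} r̄_n)` does not depend on `n` (`wronskian_step`); its value is `-μ`.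

It follows by induction that `p N = 1 - r_N r̄_N` and `q N = -c r_{N+1} / r_N`: the recurrence for
`p` is the conservation law, and the recurrence for `q` is discrete Painlevé II, once one observes
that the denominator `q N (q N (p N - 1) - μ) + t` equals `t p (N+1)`. The nonvanishing of `q N` and
of the denominators gives `r_N ≠ 0` and `h_N ≠ 0`, hence `τ_N ≠ 0`, for all `N`.
-/

open MeasureTheory Finset

/-- Modified Bessel function I_ν(x) = ∑_{k=0}^∞ (x/2)^{ν+2k}/(k!·Γ(ν+k+1)). -/
noncomputable def besselI (ν x : ℝ) : ℝ :=
  ∑' k : ℕ, (x / 2) ^ (ν + 2 * (k : ℝ)) / ((k.factorial : ℝ) * Real.Gamma (ν + (k : ℝ) + 1))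

/-- τ^{III'}[N](s;μ) = det[ I_{μ+j−k}(√s) ]_{j,k=1,…,N}, with τ^{III'}[0] = 1. -/
noncomputable def tauIII (N : ℕ) (s μ : ℝ) : ℝ :=
  Matrix.det (Matrix.of fun j k : Fin N => besselI (μ + (j : ℕ) - (k : ℕ)) (Real.sqrt s))

namespace BesselToeplitz

/-! ### The Bessel function as a power series -/

/-- The entire function `s ↦ s^{-ν/2} I_ν(2√s)`. Terms in which `Γ` has a pole vanish, since
`Real.Gamma` is `0` there and division by `0` gives `0`. -/
noncomputable def besselSeries (ν s : ℝ) : ℝ :=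
  ∑' k : ℕ, s ^ k / ((k.factorial : ℝ) * Real.Gamma (ν + k + 1))

lemma besselI_eq {s : ℝ} (hs : 0 < s) (ν : ℝ) :
    besselI ν (2 * Real.sqrt s) = s ^ (ν / 2) * besselSeries ν s := by
  rw [besselI, besselSeries, ← tsum_mul_left]
  refine tsum_congr fun k => ?_
  rw [mul_div_cancel_left₀ _ two_ne_zero, Real.sqrt_eq_rpow, ← Real.rpow_mul hs.le,
    show (1 / 2 : ℝ) * (ν + 2 * k) = ν / 2 + k by ring, Real.rpow_add hs, Real.rpow_natCast,
    mul_div_assoc]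

lemma exists_bound_inv_Gamma (ν : ℝ) : ∃ C : ℝ, ∀ k : ℕ, |(Real.Gamma (ν + k + 1))⁻¹| ≤ C := by
  have h1 : Filter.Tendsto (fun k : ℕ => ν + k + 1) Filter.atTop Filter.atTop :=
    Filter.tendsto_atTop_add_const_right _ _
      (Filter.tendsto_atTop_add_const_left _ _ tendsto_natCast_atTop_atTop)
  have h2 : Filter.IsBoundedUnder (· ≤ ·) Filter.atTop
      fun k : ℕ => |(Real.Gamma (ν + k + 1))⁻¹| := by
    refine Filter.isBoundedUnder_of_eventually_le (a := 1) ?_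
    filter_upwards [h1.eventually_ge_atTop 2] with k hk
    have h3 : 1 ≤ Real.Gamma (ν + k + 1) := by
      have h4 := Real.Gamma_strictMonoOn_Ici.monotoneOn Set.self_mem_Ici hk hk
      rwa [Real.Gamma_two] at h4
    rw [abs_of_nonneg (by positivity)]
    exact inv_le_one_of_one_le₀ h3
  obtain ⟨C, hC⟩ := h2.bddAbove_range
  exact ⟨C, fun k => hC ⟨k, rfl⟩⟩

lemma summable_besselSeries (ν s : ℝ) :
    Summable fun k : ℕ => s ^ k / ((k.factorial : ℝ) * Real.Gamma (ν + k + 1)) := by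
  obtain ⟨C, hC⟩ := exists_bound_inv_Gamma ν
  refine Summable.of_norm_bounded ((Real.summable_pow_div_factorial |s|).mul_right C) fun k => ?_
  rw [← div_div, div_eq_mul_inv _ (Real.Gamma _), norm_mul, Real.norm_eq_abs, Real.norm_eq_abs,
    abs_div, abs_pow, Nat.abs_cast]
  exact mul_le_mul_of_nonneg_left (hC k) (by positivity)

/-- The functional equation of `1/Γ`, which holds at the poles of `Γ` as well because `Real.Gamma`
takes the value `0` there. -/
lemma inv_Gamma (y : ℝ) : (Real.Gamma y)⁻¹ = y * (Real.Gamma (y + 1))⁻¹ := by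
  rcases eq_or_ne y 0 with rfl | hy
  · simp
  · rw [Real.Gamma_add_one hy]
    field_simp

lemma besselSeries_recurrence (ν s : ℝ) :
    besselSeries (ν - 1) s - s * besselSeries (ν + 1) s = ν * besselSeries ν s := by
  have hsum := summable_besselSeries
  have e1 := (hsum (ν - 1) s).tsum_eq_zero_add
  have e0 := (hsum ν s).tsum_eq_zero_add
  have s1 := (summable_nat_add_iff 1).2 (hsum (ν - 1) s)
  have s0 := (summable_nat_add_iff 1).2 (hsum ν s)
  simp only [besselSeries]
  rw [e1, e0, ← tsum_mul_left, mul_add, ← tsum_mul_left, add_sub_assoc,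
    ← s1.tsum_sub ((hsum (ν + 1) s).mul_left s)]
  congr 1
  · have := inv_Gamma ν
    simp only [Nat.factorial_zero, Nat.cast_zero, pow_zero, Nat.cast_one, one_mul, add_zero,
      sub_add_cancel, one_div]
    exact this
  · refine tsum_congr fun k => ?_
    have h := inv_Gamma (ν + k + 1)
    have hf : ((k.factorial : ℕ) : ℝ) ≠ 0 := by positivity
    have hk : (k + 1 : ℝ) ≠ 0 := by positivity
    rw [Nat.factorial_succ]
    push_cast
    rw [show ν - 1 + (k + 1 : ℝ) + 1 = ν + k + 1 by ring,
      show ν + (k + 1 : ℝ) + 1 = ν + k + 1 + 1 by ring,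
      show ν + 1 + (k : ℝ) + 1 = ν + k + 1 + 1 by ring]
    simp only [div_eq_mul_inv, mul_inv]
    rw [h]
    field_simp
    ring

/-- Termwise differentiation shifts the index `ν` by one. -/
lemma hasDerivAt_besselSeries (ν s : ℝ) :
    HasDerivAt (besselSeries ν) (besselSeries (ν + 1) s) s := by
  obtain ⟨C, hC⟩ := exists_bound_inv_Gamma ν
  have hC0 : 0 ≤ C := (abs_nonneg _).trans (hC 0)
  -- On `(-R, R)` the differentiated terms are dominated by those of `C` times the series of `exp R`.
  set R := |s| + 1 with hR
  have hu : Summable fun k : ℕ => R ^ (k - 1) / ((k - 1).factorial : ℝ) * C :=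
    ((summable_nat_add_iff (f := fun k : ℕ => R ^ (k - 1) / ((k - 1).factorial : ℝ)) 1).1
      (Real.summable_pow_div_factorial R)).mul_right C
  have hfac (k : ℕ) (y : ℝ) : (k : ℝ) * y ^ (k - 1) / ((k.factorial : ℝ) * Real.Gamma (ν + k + 1))
      = (if k = 0 then 0 else y ^ (k - 1) / ((k - 1).factorial : ℝ)) *
        (Real.Gamma (ν + k + 1))⁻¹ := by
    rcases k with _ | k
    · simp
    · rw [Nat.factorial_succ, if_neg k.succ_ne_zero, Nat.add_sub_cancel, ← div_div]
      push_cast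
      rw [div_eq_mul_inv _ (Real.Gamma _), mul_div_mul_left _ _ (by positivity)]
  have key := hasDerivAt_tsum_of_isPreconnected (t := Set.Ioo (-R) R) (y₀ := s) (y := s) hu
    isOpen_Ioo isPreconnected_Ioo
    (g := fun (k : ℕ) (y : ℝ) => y ^ k / ((k.factorial : ℝ) * Real.Gamma (ν + k + 1)))
    (g' := fun (k : ℕ) (y : ℝ) => (k : ℝ) * y ^ (k - 1) / ((k.factorial : ℝ) * Real.Gamma (ν + k + 1)))
    (fun k y _ => (hasDerivAt_pow k y).div_const _) (fun k y hy => by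
      have hy' : |y| ≤ R := (abs_lt.2 hy).le
      rw [hfac, norm_mul]
      refine mul_le_mul ?_ (hC k) (norm_nonneg _) (by positivity)
      split_ifs
      · simp only [norm_zero]; positivity
      · rw [norm_div, norm_pow, Real.norm_eq_abs, RCLike.norm_natCast]
        gcongr)
    (abs_lt.1 (lt_add_one _)) (summable_besselSeries ν s) (abs_lt.1 (lt_add_one _))
  have hval : ∑' k : ℕ, (k : ℝ) * s ^ (k - 1) / ((k.factorial : ℝ) * Real.Gamma (ν + k + 1)) =
      besselSeries (ν + 1) s := by
    have hs : Summable fun k : ℕ =>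
        (k : ℝ) * s ^ (k - 1) / ((k.factorial : ℝ) * Real.Gamma (ν + k + 1)) := by
      rw [← summable_nat_add_iff 1]
      refine (summable_besselSeries (ν + 1) s).congr fun k => ?_
      rw [hfac, if_neg k.succ_ne_zero, Nat.add_sub_cancel, ← div_div, div_eq_mul_inv _ (Real.Gamma _)]
      push_cast
      ring_nf
    rw [hs.tsum_eq_zero_add, besselSeries]
    simp only [Nat.cast_zero, zero_mul, zero_div, zero_add]
    refine tsum_congr fun k => ?_
    rw [hfac, if_neg k.succ_ne_zero, Nat.add_sub_cancel, ← div_div, div_eq_mul_inv _ (Real.Gamma _)]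
    push_cast
    ring_nf
  rw [hval] at key
  exact key

/-- At a zero of a continuous function the derivative of its logarithm is `0` under the conventions
`Real.log 0 = 0` and `deriv = 0` at points of non-differentiability: if `log |f|` is continuous at
the zero, then `f` vanishes nearby. -/
lemma deriv_log_eq_zero {f : ℝ → ℝ} {t : ℝ} (hf : ContinuousAt f t) (h0 : f t = 0) :
    deriv (fun s => Real.log (f s)) t = 0 := by
  by_cases hd : DifferentiableAt ℝ (fun s => Real.log (f s)) t
  · have hc := hd.continuousAt
    have h1 : ∀ᶠ s in nhds t, -1 < Real.log (f s) :=
      hc.eventually (lt_mem_nhds (by simp [h0]))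
    have h2 : ∀ᶠ s in nhds t, |f s| < Real.exp (-1) :=
      hf.abs.eventually (gt_mem_nhds (by simp only [h0, abs_zero]; positivity))
    have h3 : (fun s => Real.log (f s)) =ᶠ[nhds t] fun _ => 0 := by
      filter_upwards [h1, h2] with s hs1 hs2
      rcases eq_or_ne (f s) 0 with h | h
      · rw [h, Real.log_zero]
      · have := Real.log_lt_log (abs_pos.2 h) hs2
        rw [Real.log_abs, Real.log_exp] at this
        linarith
    rw [h3.deriv_eq, deriv_const]
  · exact deriv_zero_of_not_differentiableAt hd

/-- If `besselSeries μ t = 0`, both sides are `0` by convention. -/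
lemma deriv_log_bessel {t : ℝ} (ht : 0 < t) (μ : ℝ) :
    deriv (fun s => Real.log (s ^ (-μ / 2) * besselI μ (2 * Real.sqrt s))) t =
      besselSeries (μ + 1) t / besselSeries μ t := by
  have he : (fun s => Real.log (s ^ (-μ / 2) * besselI μ (2 * Real.sqrt s))) =ᶠ[nhds t]
      fun s => Real.log (besselSeries μ s) := by
    filter_upwards [lt_mem_nhds ht] with s hs
    rw [besselI_eq hs, ← mul_assoc, ← Real.rpow_add hs, neg_div, neg_add_cancel, Real.rpow_zero,
      one_mul]
  have hd := hasDerivAt_besselSeries μ t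
  rw [he.deriv_eq]
  by_cases h0 : besselSeries μ t = 0
  · rw [deriv_log_eq_zero hd.continuousAt h0, h0, div_zero]
  · exact (hd.log h0).deriv


/-! ### The moment functional and its Szegő polynomials -/

section Toeplitz

open Polynomial

/-- The pairing `L(P z^{-k})`, where `L` is the functional on Laurent polynomials with moments
`L(z^m) = a m`. -/
noncomputable def mom (a : ℤ → ℝ) (k : ℤ) : ℝ[X] →ₗ[ℝ] ℝ :=
  Polynomial.lsum fun i => a (i - k) • LinearMap.id

variable (a : ℤ → ℝ)

lemma mom_monomial (k : ℤ) (i : ℕ) (x : ℝ) : mom a k (monomial i x) = a (i - k) * x := by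
  simp [mom, Polynomial.lsum_apply]

lemma mom_one (k : ℤ) : mom a k 1 = a (-k) := by
  have := mom_monomial a k 0 1
  simpa using this

lemma mom_X_mul (k : ℤ) (P : ℝ[X]) : mom a k (X * P) = mom a (k - 1) P := by
  induction P using Polynomial.induction_on' with
  | add p q hp hq => rw [mul_add, map_add, map_add, hp, hq]
  | monomial i x =>
    rw [X_mul_monomial, mom_monomial, mom_monomial]
    congr 2
    push_cast
    ring

lemma mom_C_mul (k : ℤ) (x : ℝ) (P : ℝ[X]) : mom a k (C x * P) = x * mom a k P := by
  rw [← smul_eq_C_mul, map_smul, smul_eq_mul]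

/-- The Pearson equation `L(z f' + μ f + c (z - z⁻¹) f) = 0` for `f = P z^{-k}`. -/
lemma mom_pearson {c μ : ℝ} (ha : ∀ k : ℤ, c * (a (k - 1) - a (k + 1)) = (μ + k) * a k)
    (k : ℤ) (P : ℝ[X]) :
    mom a k (X * derivative P) =
      (k - μ) * mom a k P + c * (mom a (k + 1) P - mom a (k - 1) P) := by
  induction P using Polynomial.induction_on' with
  | add p q hp hq => rw [derivative_add, mul_add, map_add, hp, hq]; simp only [map_add]; ring
  | monomial i x =>
    have h : X * derivative (monomial i x) = monomial i (x * i : ℝ) := by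
      rcases i with _ | i
      · simp
      · rw [derivative_monomial, X_mul_monomial]; simp
    have h2 := ha (i - k)
    rw [h]
    simp only [mom_monomial]
    rw [show (i : ℤ) - (k + 1) = i - k - 1 by ring, show (i : ℤ) - (k - 1) = i - k + 1 by ring]
    push_cast at h2
    linear_combination (-x) * h2

lemma mom_eq_sum (k : ℤ) (P : ℝ[X]) (n : ℕ) (hP : P.natDegree < n) :
    mom a k P = ∑ i : Fin n, P.coeff i * a ((i : ℕ) - k) := by
  conv_lhs => rw [P.as_sum_range' n hP]
  rw [map_sum, Finset.sum_range]
  refine Finset.sum_congr rfl fun i _ => ?_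
  rw [mom_monomial, mul_comm]

/-- The pair `(Φ_n, Φ*_n)` of Szegő polynomials, defined by the Szegő recursion. The coefficients
are meaningful as long as the norms `L(Φ*_j)`, `j < n`, do not vanish. -/
noncomputable def szego : ℕ → ℝ[X] × ℝ[X]
  | 0 => (1, 1)
  | n + 1 =>
    (X * (szego n).1 + C (-mom a (-1) (szego n).1 / mom a 0 (szego n).2) * (szego n).2,
      (szego n).2 + C (-mom a (n + 1) (szego n).2 / mom a 0 (szego n).2) * (X * (szego n).1))

/-- The monic orthogonal polynomial `Φ_n`, with `L(Φ_n z^{-k}) = 0` for `0 ≤ k < n`. -/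
noncomputable def phi (n : ℕ) : ℝ[X] := (szego a n).1

/-- The reversed polynomial `Φ*_n`, with constant term `1` and `L(Φ*_n z^{-k}) = 0` for
`1 ≤ k ≤ n`. -/
noncomputable def phiStar (n : ℕ) : ℝ[X] := (szego a n).2

/-- The norm `h_n = L(Φ*_n) = L(Φ_n z^{-n})`. -/
noncomputable def hnorm (n : ℕ) : ℝ := mom a 0 (phiStar a n)

/-- The reflection (Verblunsky) coefficient `r_n = Φ_n(0)`. -/
noncomputable def ver (n : ℕ) : ℝ := (phi a n).coeff 0

/-- The dual reflection coefficient `r̄_n`, the coefficient of `z^n` in `Φ*_n`. -/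
noncomputable def verBar (n : ℕ) : ℝ := (phiStar a n).coeff n

@[simp] lemma phi_zero : phi a 0 = 1 := rfl

@[simp] lemma phiStar_zero : phiStar a 0 = 1 := rfl

lemma hnorm_zero : hnorm a 0 = a 0 := by simp [hnorm, mom_one]

@[simp] lemma ver_zero : ver a 0 = 1 := by simp [ver]

@[simp] lemma verBar_zero : verBar a 0 = 1 := by simp [verBar]

lemma natDegree_le (n : ℕ) : (phi a n).natDegree ≤ n ∧ (phiStar a n).natDegree ≤ n := by
  induction n with
  | zero => simp
  | succ n ih =>
    have h1 : (X * phi a n).natDegree ≤ n + 1 := by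
      refine natDegree_mul_le.trans ?_
      have := natDegree_X_le (R := ℝ)
      omega
    constructor
    · exact natDegree_add_le_of_degree_le h1 ((natDegree_C_mul_le _ _).trans (ih.2.trans n.le_succ))
    · exact natDegree_add_le_of_degree_le (ih.2.trans n.le_succ) ((natDegree_C_mul_le _ _).trans h1)

lemma coeff_phiStar_zero (n : ℕ) : (phiStar a n).coeff 0 = 1 := by
  induction n with
  | zero => simp
  | succ n ih =>
    change ((phiStar a n) + C _ * (X * phi a n)).coeff 0 = 1
    rw [coeff_add, coeff_C_mul, mul_coeff_zero, coeff_X_zero, ih]; ring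

lemma coeff_phi_self (n : ℕ) : (phi a n).coeff n = 1 := by
  induction n with
  | zero => simp
  | succ n ih =>
    change (X * phi a n + C _ * phiStar a n).coeff (n + 1) = 1
    rw [coeff_add, coeff_C_mul, coeff_X_mul, ih,
      coeff_eq_zero_of_natDegree_lt (Nat.lt_succ_of_le (natDegree_le a n).2)]; ring

lemma ver_succ (n : ℕ) : ver a (n + 1) = -mom a (-1) (phi a n) / hnorm a n := by
  change (X * phi a n + C _ * phiStar a n).coeff 0 = _
  rw [coeff_add, coeff_C_mul, mul_coeff_zero, coeff_X_zero, coeff_phiStar_zero, hnorm]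
  simp [phi, phiStar]

lemma verBar_succ (n : ℕ) : verBar a (n + 1) = -mom a (n + 1) (phiStar a n) / hnorm a n := by
  change ((phiStar a n) + C _ * (X * phi a n)).coeff (n + 1) = _
  rw [coeff_add, coeff_C_mul, coeff_X_mul, coeff_phi_self,
    coeff_eq_zero_of_natDegree_lt (Nat.lt_succ_of_le (natDegree_le a n).2), hnorm]
  simp [phiStar]

lemma phi_succ (n : ℕ) : phi a (n + 1) = X * phi a n + C (ver a (n + 1)) * phiStar a n := by
  rw [ver_succ]; rfl

lemma phiStar_succ (n : ℕ) :
    phiStar a (n + 1) = phiStar a n + C (verBar a (n + 1)) * (X * phi a n) := by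
  rw [verBar_succ]; rfl

lemma mom_phi_neg_one (n : ℕ) (hn : hnorm a n ≠ 0) :
    mom a (-1) (phi a n) = -(ver a (n + 1) * hnorm a n) := by
  rw [ver_succ]; field_simp

lemma mom_phiStar_succ (n : ℕ) (hn : hnorm a n ≠ 0) :
    mom a (n + 1) (phiStar a n) = -(verBar a (n + 1) * hnorm a n) := by
  rw [verBar_succ]; field_simp

/-- Biorthogonality of `Φ_n` and `Φ*_n`, and the resulting recursion for the norms. -/
lemma orthogonality (n : ℕ) (hn : ∀ j < n, hnorm a j ≠ 0) :
    (∀ k : ℤ, 0 ≤ k → k ≤ n → mom a k (phi a n) = if k = n then hnorm a n else 0) ∧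
    (∀ k : ℤ, 0 ≤ k → k ≤ n → mom a k (phiStar a n) = if k = 0 then hnorm a n else 0) ∧
    (∀ m, n = m + 1 → hnorm a n = hnorm a m * (1 - ver a n * verBar a n)) := by
  induction n with
  | zero =>
    refine ⟨fun k h0 h1 => ?_, fun k h0 h1 => ?_, by simp⟩ <;>
    · obtain rfl : k = 0 := by push_cast at h1; omega
      simp [hnorm]
  | succ n ih =>
    obtain ⟨ih1, ih2, -⟩ := ih fun j hj => hn j (by omega)
    have hne := hn n (by omega)
    have e1 := mom_phi_neg_one a n hne
    have e2 := mom_phiStar_succ a n hne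
    have hN : hnorm a (n + 1) = hnorm a n * (1 - ver a (n + 1) * verBar a (n + 1)) := by
      rw [hnorm, phiStar_succ, map_add, mom_C_mul, mom_X_mul, zero_sub, e1, ← hnorm]; ring
    refine ⟨fun k h0 h1 => ?_, fun k h0 h1 => ?_, fun m hm => ?_⟩
    · push_cast at h1
      rw [phi_succ, map_add, mom_C_mul, mom_X_mul]
      by_cases hk : k = n + 1
      · rw [hk, e2, add_sub_cancel_right, ih1 n (by omega) le_rfl, if_pos rfl,
          if_pos (by push_cast; ring), hN]; ring
      · rw [ih2 k h0 (by omega), if_neg (c := k = ((n + 1 : ℕ) : ℤ)) (by push_cast; exact hk)]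
        by_cases hk0 : k = 0
        · subst hk0
          rw [zero_sub, e1, if_pos rfl]; ring
        · rw [ih1 (k - 1) (by omega) (by omega), if_neg (by omega), if_neg hk0]; ring
    · push_cast at h1
      by_cases hk0 : k = 0
      · rw [hk0, if_pos rfl, hnorm]
      rw [phiStar_succ, map_add, mom_C_mul, mom_X_mul, if_neg hk0]
      by_cases hk : k = n + 1
      · rw [hk, e2, add_sub_cancel_right, ih1 n (by omega) le_rfl, if_pos rfl]; ring
      · rw [ih2 k h0 (by omega), ih1 (k - 1) (by omega) (by omega), if_neg hk0,
          if_neg (by omega)]; ring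
    · obtain rfl : n = m := by omega
      exact hN

/-! ### Toeplitz determinants -/

/-- The `n × n` Toeplitz matrix `(a (j - k))`. -/
noncomputable def toep (n : ℕ) : Matrix (Fin n) (Fin n) ℝ :=
  Matrix.of fun j k => a ((j : ℕ) - (k : ℕ))

/-- Multiplying the Toeplitz matrix on the left by the unitriangular coefficient matrix of the `Φ_j`
produces an upper triangular matrix with diagonal `h_0, …, h_{n-1}`. -/
lemma det_toep (n : ℕ) (hn : ∀ j < n, hnorm a j ≠ 0) :
    (toep a n).det = ∏ j ∈ Finset.range n, hnorm a j := by
  set U : Matrix (Fin n) (Fin n) ℝ := Matrix.of fun j i => (phi a j).coeff i with hU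
  have hUdet : U.det = 1 := by
    rw [Matrix.det_of_isLowerTriangular]
    · exact Finset.prod_eq_one fun i _ => coeff_phi_self a i
    · intro i j hij
      have hij' : i < j := hij
      exact coeff_eq_zero_of_natDegree_lt (lt_of_le_of_lt (natDegree_le a i).1 hij')
  have hent (j k : Fin n) : (U * toep a n) j k = mom a (k : ℕ) (phi a j) := by
    rw [mom_eq_sum a _ _ n (lt_of_le_of_lt (natDegree_le a j).1 j.2), Matrix.mul_apply]
    rfl
  have hprod : (U * toep a n).det = ∏ j ∈ Finset.range n, hnorm a j := by
    rw [Matrix.det_of_isUpperTriangular, Finset.prod_range]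
    · refine Finset.prod_congr rfl fun j _ => ?_
      rw [hent, (orthogonality a j fun i hi => hn i (by omega)).1 _ (by omega) le_rfl, if_pos rfl]
    · intro j k hkj
      have hkj' : k < j := hkj
      have : (k : ℕ) < j := hkj'
      rw [hent, (orthogonality a j fun i hi => hn i (by omega)).1 _ (by omega) (by omega),
        if_neg (by omega)]
  rw [Matrix.det_mul, hUdet, one_mul] at hprod
  exact hprod

lemma eq_zero_of_mom (n : ℕ) (hn : ∀ j < n, hnorm a j ≠ 0) (Q : ℝ[X]) (hQ : Q.degree < n)
    (h : ∀ k < n, mom a (k : ℕ) Q = 0) : Q = 0 := by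
  have hdet : (toep a n).det ≠ 0 := by
    rw [det_toep a n hn]
    exact Finset.prod_ne_zero_iff.2 fun j hj => hn j (Finset.mem_range.1 hj)
  by_contra hne
  have hdeg : Q.natDegree < n := (natDegree_lt_iff_degree_lt hne).2 hQ
  have hv := Matrix.eq_zero_of_vecMul_eq_zero hdet (v := fun i : Fin n => Q.coeff i) (by
    ext k
    have := h k k.2
    rw [mom_eq_sum a _ _ n hdeg] at this
    exact this)
  exact hne (leadingCoeff_eq_zero.1 (congrFun hv ⟨Q.natDegree, hdeg⟩))

/-- A polynomial of degree at most `n` which is orthogonal to `z^{-k}` for `0 < k < n` is a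
combination of `Φ*_n` and `Φ_n`. The two summands on the right of `h` overlap when `n = 0`. -/
lemma eq_combination (n : ℕ) (hn : ∀ j < n + 1, hnorm a j ≠ 0) (P : ℝ[X]) (hP : P.degree < (n + 1 : ℕ))
    (α β : ℝ) (h : ∀ k : ℤ, 0 ≤ k → k ≤ n → mom a k P =
      (if k = 0 then α * hnorm a n else 0) + (if k = n then β * hnorm a n else 0)) :
    P = C α * phiStar a n + C β * phi a n := by
  have hd (x : ℝ) (R : ℝ[X]) (hR : R.natDegree ≤ n) : (C x * R).degree < (n + 1 : ℕ) :=
    degree_lt_iff_coeff_zero _ _ |>.2 fun m hm => by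
      rw [coeff_C_mul, coeff_eq_zero_of_natDegree_lt (by omega), mul_zero]
  obtain ⟨o1, o2, -⟩ := orthogonality a n fun j hj => hn j (by omega)
  rw [← sub_eq_zero]
  refine eq_zero_of_mom a (n + 1) hn _ ?_ fun k hk => ?_
  · refine lt_of_le_of_lt (degree_sub_le _ _) (max_lt hP ?_)
    exact lt_of_le_of_lt (degree_add_le _ _) (max_lt (hd _ _ (natDegree_le a n).2)
      (hd _ _ (natDegree_le a n).1))
  · rw [map_sub, map_add, mom_C_mul, mom_C_mul, h k (by omega) (by omega),
      o1 k (by omega) (by omega), o2 k (by omega) (by omega)]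
    split_ifs <;> ring

variable {a}

/-! ### Discrete Painlevé II -/

/-- Discrete Painlevé II for `r`: the constant term of the expansion of
`(n+1) Φ_{n+1} - z Φ_{n+1}'` in `Φ*_n` and `Φ_n`. -/
lemma ver_recurrence {c μ : ℝ} (ha : ∀ k : ℤ, c * (a (k - 1) - a (k + 1)) = (μ + k) * a k)
    (n : ℕ) (hn : ∀ j < n + 2, hnorm a j ≠ 0) :
    (n + 1) * ver a (n + 1) =
      -c * (1 - ver a (n + 1) * verBar a (n + 1)) * (ver a (n + 2) + ver a n) := by
  obtain ⟨o1, -, o3⟩ := orthogonality a (n + 1) fun j hj => hn j (by omega)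
  have hN := o3 n rfl
  have e1 := mom_phi_neg_one a (n + 1) (hn _ (by omega))
  set ρ := 1 - ver a (n + 1) * verBar a (n + 1)
  have key := eq_combination a n (fun j hj => hn j (by omega))
    (C ((n : ℝ) + 1) * phi a (n + 1) - X * derivative (phi a (n + 1)))
    (degree_lt_iff_coeff_zero _ _ |>.2 fun m hm => by
      obtain ⟨m, rfl⟩ : ∃ l, m = l + 1 := ⟨m - 1, by omega⟩
      rw [coeff_sub, coeff_C_mul, coeff_X_mul, coeff_derivative]
      rcases eq_or_ne m n with rfl | hmn
      · ring
      · rw [coeff_eq_zero_of_natDegree_lt (lt_of_le_of_lt (natDegree_le a (n + 1)).1 (by omega))]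
        ring)
    (-c * ver a (n + 2) * ρ) (-c * ρ) (fun k h0 h1 => by
      rw [map_sub, mom_C_mul, mom_pearson a ha, o1 k h0 (by push_cast; omega),
        o1 (k + 1) (by omega) (by push_cast; omega), if_neg (by push_cast; omega), hN]
      have hk : mom a (k - 1) (phi a (n + 1)) =
          if k = 0 then -(ver a (n + 2) * (hnorm a n * ρ)) else 0 := by
        split_ifs with hk
        · rw [hk, zero_sub, e1, hN]
        · rw [o1 (k - 1) (by omega) (by push_cast; omega), if_neg (by push_cast; omega)]
      rw [hk]
      have hk2 : (k + 1 = ((n + 1 : ℕ) : ℤ)) ↔ k = n := by push_cast; omega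
      simp only [hk2]
      split_ifs <;> ring)
  have := congrArg (fun P => coeff P 0) key
  simp only [coeff_sub, coeff_add, coeff_C_zero, mul_coeff_zero, coeff_X_zero,
    coeff_phiStar_zero] at this
  simp only [ver] at this ⊢
  linear_combination this

/-- Discrete Painlevé II for `r̄`: the coefficient of `z^n` in the expansion of `Φ*_{n+1}'` in
`Φ*_n` and `Φ_n`. -/
lemma verBar_recurrence {c μ : ℝ} (ha : ∀ k : ℤ, c * (a (k - 1) - a (k + 1)) = (μ + k) * a k)
    (n : ℕ) (hn : ∀ j < n + 2, hnorm a j ≠ 0) :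
    (n + 1) * verBar a (n + 1) =
      -c * (1 - ver a (n + 1) * verBar a (n + 1)) * (verBar a (n + 2) + verBar a n) := by
  obtain ⟨-, o2, o3⟩ := orthogonality a (n + 1) fun j hj => hn j (by omega)
  have hN := o3 n rfl
  have e1 := mom_phiStar_succ a (n + 1) (hn _ (by omega))
  set ρ := 1 - ver a (n + 1) * verBar a (n + 1)
  have key := eq_combination a n (fun j hj => hn j (by omega))
    (derivative (phiStar a (n + 1)))
    (degree_lt_iff_coeff_zero _ _ |>.2 fun m hm => by
      rw [coeff_derivative,
        coeff_eq_zero_of_natDegree_lt (lt_of_le_of_lt (natDegree_le a (n + 1)).2 (by omega))]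
      ring)
    (-c * ρ) (-c * verBar a (n + 2) * ρ) (fun k h0 h1 => by
      have hX := mom_X_mul a (k + 1) (derivative (phiStar a (n + 1)))
      rw [add_sub_cancel_right] at hX
      rw [← hX, mom_pearson a ha, o2 (k + 1) (by omega) (by push_cast; omega),
        if_neg (by omega), add_sub_cancel_right, o2 k h0 (by push_cast; omega), hN]
      have hk : mom a (k + 1 + 1) (phiStar a (n + 1)) =
          if k = n then -(verBar a (n + 2) * (hnorm a n * ρ)) else 0 := by
        split_ifs with hk
        · rw [hk, ← hN, ← e1]; push_cast; rfl
        · rw [o2 (k + 1 + 1) (by omega) (by push_cast; omega), if_neg (by omega)]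
      rw [hk]
      split_ifs <;> ring)
  have := congrArg (fun P => coeff P n) key
  simp only [coeff_add, coeff_C_mul, coeff_phi_self, coeff_derivative] at this
  simp only [verBar] at this ⊢
  linear_combination this

/-- The quantity `c (r̄_{n+1} r_n - r_{n+1} r̄_n)` is independent of `n`. -/
lemma wronskian_step {c μ : ℝ} (ha : ∀ k : ℤ, c * (a (k - 1) - a (k + 1)) = (μ + k) * a k)
    (n : ℕ) (hn : ∀ j < n + 2, hnorm a j ≠ 0) :
    c * (verBar a (n + 2) * ver a (n + 1) - ver a (n + 2) * verBar a (n + 1)) =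
      c * (verBar a (n + 1) * ver a n - ver a (n + 1) * verBar a n) := by
  have h1 := ver_recurrence ha n hn
  have h2 := verBar_recurrence ha n hn
  have h3 := (orthogonality a (n + 1) fun j hj => hn j (by omega)).2.2 n rfl
  have h4 : 1 - ver a (n + 1) * verBar a (n + 1) ≠ 0 := fun h =>
    hn (n + 1) (by omega) (by rw [h3, h, mul_zero])
  apply mul_left_cancel₀ h4
  linear_combination ver a (n + 1) * h2 - verBar a (n + 1) * h1

end Toeplitz

/-! ### Bessel moments -/

/-- The moments `I_{μ+m}(2√t)`, `m ∈ ℤ`. -/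
noncomputable def besselMoment (t μ : ℝ) (m : ℤ) : ℝ := besselI (μ + m) (Real.sqrt (4 * t))

lemma besselMoment_eq {t : ℝ} (ht : 0 < t) (μ : ℝ) (m : ℤ) :
    besselMoment t μ m = t ^ ((μ + m) / 2) * besselSeries (μ + m) t := by
  have h4 : Real.sqrt (4 * t) = 2 * Real.sqrt t := by
    rw [Real.sqrt_mul (by norm_num), show (4 : ℝ) = 2 ^ 2 by norm_num,
      Real.sqrt_sq (by norm_num)]
  rw [besselMoment, h4, besselI_eq ht]

lemma besselMoment_recurrence {t : ℝ} (ht : 0 < t) (μ : ℝ) (k : ℤ) :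
    Real.sqrt t * (besselMoment t μ (k - 1) - besselMoment t μ (k + 1)) =
      (μ + k) * besselMoment t μ k := by
  have h := besselSeries_recurrence (μ + k) t
  have hc := Real.mul_self_sqrt ht.le
  have hc0 : Real.sqrt t ≠ 0 := (Real.sqrt_pos.2 ht).ne'
  simp only [besselMoment_eq ht]
  push_cast
  rw [show μ + (k - 1 : ℝ) = μ + k - 1 by ring, show μ + (k + 1 : ℝ) = μ + k + 1 by ring,
    show (μ + k + 1) / 2 = (μ + k) / 2 + 1 / 2 by ring,
    show (μ + k - 1) / 2 = (μ + k) / 2 - 1 / 2 by ring,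
    Real.rpow_add ht, Real.rpow_sub ht, ← Real.sqrt_eq_rpow]
  field_simp
  linear_combination h - besselSeries (μ + k + 1) t * hc

lemma tauIII_eq (t μ : ℝ) (N : ℕ) : tauIII N (4 * t) μ = (toep (besselMoment t μ) N).det := by
  rw [tauIII, toep]
  congr 2
  ext j k
  simp only [besselMoment]
  push_cast
  rw [add_sub_assoc]

end BesselToeplitz

open BesselToeplitz in
theorem stmt_5 (t μ : ℝ) (ht : 0 < t) (p q : ℕ → ℝ)
    (hp0 : p 0 = 0)
    (hq0 : q 0 = t * deriv (fun s => Real.log (s ^ (-μ / 2) * besselI μ (2 * Real.sqrt s))) t)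
    (hqne : ∀ N : ℕ, q N ≠ 0)
    (hdenne : ∀ N : ℕ, q N * (q N * (p N - 1) - μ) + t ≠ 0)
    (hprec : ∀ N : ℕ, p (N + 1) = (q N) ^ 2 / t * (p N - 1) - μ * q N / t + 1)
    (hqrec : ∀ N : ℕ, q (N + 1) = -t / q N +
      (1 + (N : ℝ)) * t / (q N * (q N * (p N - 1) - μ) + t)) :
    ∀ N : ℕ, 1 ≤ N → tauIII N (4 * t) μ ≠ 0 →
      tauIII (N + 1) (4 * t) μ * tauIII (N - 1) (4 * t) μ / (tauIII N (4 * t) μ) ^ 2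
        = p N := by
  set a := besselMoment t μ with ha_def
  set c := Real.sqrt t with hc_def
  have hc0 : c ≠ 0 := (Real.sqrt_pos.2 ht).ne'
  have hcc : c ^ 2 = t := Real.sq_sqrt ht.le
  have ha : ∀ k : ℤ, c * (a (k - 1) - a (k + 1)) = (μ + k) * a k :=
    besselMoment_recurrence ht μ
  rw [deriv_log_bessel ht] at hq0
  -- A zero of the Bessel function at `t` would force `q 0 = 0`.
  have hF : besselSeries μ t ≠ 0 := fun h => hqne 0 (by rw [hq0, h, div_zero, mul_zero])
  have ha0 : a 0 = t ^ (μ / 2) * besselSeries μ t := by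
    rw [ha_def, besselMoment_eq ht, Int.cast_zero, add_zero]
  have ha1 : a 1 = t ^ (μ / 2) * c * besselSeries (μ + 1) t := by
    rw [ha_def, besselMoment_eq ht, Int.cast_one, add_div, Real.rpow_add ht, hc_def,
      Real.sqrt_eq_rpow]
  have hpow : t ^ (μ / 2) ≠ 0 := (Real.rpow_pos_of_pos ht _).ne'
  have ha0ne : a 0 ≠ 0 := by rw [ha0]; exact mul_ne_zero hpow hF
  have hmain : ∀ N : ℕ, (∀ j < N + 1, hnorm a j ≠ 0) ∧ p N = 1 - ver a N * verBar a N ∧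
      ver a N ≠ 0 ∧ q N * ver a N = -c * ver a (N + 1) ∧
      c * (verBar a (N + 1) * ver a N - ver a (N + 1) * verBar a N) = -μ := by
    intro N
    induction N with
    | zero =>
      have hr : ver a (0 + 1) = -a 1 / a 0 := by
        rw [ver_succ, hnorm_zero, phi_zero, mom_one]; norm_num
      have hr' : verBar a (0 + 1) = -a (-1) / a 0 := by
        rw [verBar_succ, hnorm_zero, phiStar_zero, mom_one]; norm_num
      refine ⟨fun j hj => ?_, by simp [hp0], by simp, ?_, ?_⟩
      · obtain rfl : j = 0 := by omega
        rwa [hnorm_zero]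
      · rw [ver_zero, hr, hq0, ha0, ha1, ← hcc]
        field_simp
      · have h := ha 0
        norm_num at h
        rw [hr, hr', ver_zero, verBar_zero]
        field_simp
        linear_combination -h
    | succ N ih =>
      obtain ⟨ih1, ih2, ih3, ih4, ih5⟩ := ih
      have hq : q N = -c * ver a (N + 1) / ver a N := by rw [← ih4]; field_simp
      have hr1 : ver a (N + 1) ≠ 0 := fun h => hqne N (by rw [hq, h, mul_zero, zero_div])
      have hμ : μ = -(c * (verBar a (N + 1) * ver a N - ver a (N + 1) * verBar a N)) := by
        rw [ih5, neg_neg]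
      have hp : p (N + 1) = 1 - ver a (N + 1) * verBar a (N + 1) := by
        rw [hprec, ih2, hq, hμ, ← hcc]
        field_simp
        ring
      have hden : q N * (q N * (p N - 1) - μ) + t = t * p (N + 1) := by
        rw [hprec]
        field_simp
      have hpne : p (N + 1) ≠ 0 := fun h => hdenne N (by rw [hden, h, mul_zero])
      have hh := (orthogonality a (N + 1) fun j hj => ih1 j hj).2.2 N rfl
      have hne : ∀ j < N + 2, hnorm a j ≠ 0 := by
        intro j hj
        rcases Nat.lt_or_ge j (N + 1) with h | h
        · exact ih1 j h
        · obtain rfl : j = N + 1 := by omega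
          rw [hh, ← hp]
          exact mul_ne_zero (ih1 N (by omega)) hpne
      have hB := ver_recurrence ha N hne
      rw [← hp] at hB
      refine ⟨hne, hp, hr1, ?_, ?_⟩
      · rw [hqrec, hden, hq, ← hcc]
        field_simp
        linear_combination hB
      · rw [← ih5]
        exact wronskian_step ha N hne
  intro N hN _
  obtain ⟨N, rfl⟩ : ∃ M, N = M + 1 := ⟨N - 1, by omega⟩
  have hne : ∀ j, hnorm a j ≠ 0 := fun j => (hmain j).1 j (by omega)
  rw [tauIII_eq, tauIII_eq, tauIII_eq, ← ha_def, (hmain (N + 1)).2.1, Nat.add_sub_cancel]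
  simp only [det_toep a _ fun j _ => hne j]
  have hh := (orthogonality a (N + 1) fun j _ => hne j).2.2 N rfl
  have hprod : ∏ j ∈ Finset.range N, hnorm a j ≠ 0 :=
    Finset.prod_ne_zero_iff.2 fun j _ => hne j
  have h0 := hne N
  rw [Finset.prod_range_succ _ (N + 1), Finset.prod_range_succ, hh]
  field_simp
end

section
/- Fix t > 0. Let P : ℕ → ℝ satisfy P(0) = 1, P(1) = I₁(2√t)/I₀(2√t), and the discrete Painlevé II recurrence P(n+1) + P(n−1) = n·P(n)/( √t · (1 − P(n)²) ) for all n ≥ 1, with 1 − P(n)² ≠ 0. Then for every N ≥ 1 with τ^{III'}[N](4t;0) ≠ 0, one has 1 − P(N)² = τ^{III'}[N+1](4t;0) · τ^{III'}[N−1](4t;0) / (τ^{III'}[N](4t;0))². -/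
/-!
Write `s = √t` and `c k = I_k(2√t)` for `k : ℤ`. The matrices in question are the Toeplitz matrices
`(c (j - k))`, whose orthogonal polynomials on the unit circle `Φ_n` have the Verblunsky coefficients
`r n = Φ_n(0) = (-1)^n P n`; the claim is the classical identity
`1 - r_N² = D_{N+1} D_{N-1} / D_N²` for the Toeplitz determinants `D_n`. What has to be shown is
that the solution of discrete Painlevé II singled out by `P 0` and `P 1` is this one.

The polynomials are *defined* by the Szegő recurrence `Φ_{n+1} = z Φ_n + r_{n+1} Φ_n^*` with the
given `r`, and are studied through their moments `a_n(j) = L(Φ_n z^{-j})`, `j : ℤ`, where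
`L(z^k) = c k`; since `c` is even, the moments of `Φ_n^*` are `a_n(n - j)` (`szegoMoment`).
The Bessel recurrence `k c_k = s (c_{k-1} - c_{k+1})` is the case `n = 0` of the linear relation
`j a_n(j) = s a_n(j-1) + (n - s r_n r_{n+1}) a_n(j) + s r_{n+1} a_n(n-j) - s r_n a_n(n-j-1)`,
and discrete Painlevé II is exactly the compatibility condition that carries this relation from
`n` to `n + 1` (`szegoMoment_lax`). At `j = 0` the relation reads `a_n(-1) = -r_{n+1} a_n(n)` once
`Φ_n` is known to be orthogonal to `1, …, z^{n-1}`, and this is the orthogonality of `Φ_{n+1}` to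
`1` (for `n = 0` it is the prescribed value of `P 1` instead); so the `Φ_n` are orthogonal, with norms `h_n = c_0 ∏_{1 ≤ i ≤ n} (1 - r_i²)`
(`szegoMoment_orthogonal`). Finally Cramer's rule gives `D_{n+1} = h_n D_n` (`tau_succ`).
-/

open MeasureTheory Finset

/-! ### Bessel functions of integer order -/

/-- The power series of `I_n(2s)` for a natural number `n`. -/
noncomputable def bes (s : ℝ) (n : ℕ) : ℝ :=
  ∑' k : ℕ, s ^ (n + 2 * k) / ((k.factorial : ℝ) * ((n + k).factorial : ℝ))

lemma bes_summable (s : ℝ) (hs : 0 < s) (n : ℕ) :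
    Summable fun k : ℕ => s ^ (n + 2 * k) / ((k.factorial : ℝ) * ((n + k).factorial : ℝ)) := by
  refine Summable.of_nonneg_of_le (fun k => by positivity) (fun k => ?_)
    ((Real.summable_pow_div_factorial (s ^ 2)).mul_left (s ^ n))
  rw [pow_add, pow_mul, ← mul_div_assoc]
  apply div_le_div_of_nonneg_left (by positivity) (by positivity)
  have h1 : (1 : ℝ) ≤ ((n + k).factorial : ℝ) := by exact_mod_cast Nat.factorial_pos _
  exact le_mul_of_one_le_right (by positivity) h1

lemma bes_zero_pos (s : ℝ) (hs : 0 < s) : 0 < bes s 0 :=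
  (bes_summable s hs 0).tsum_pos (fun k => by positivity) 0 (by positivity)

lemma bes_rec (s : ℝ) (hs : 0 < s) (n : ℕ) :
    ((n : ℝ) + 1) * bes s (n + 1) = s * (bes s n - bes s (n + 2)) := by
  -- Both `s I_n` and `s I_{n+2}` are multiples, term by term, of the series of `I_{n+1}`: by
  -- `n + 1 + k` and, after a shift of the index, by `k`.
  have e1 : s * bes s n = ∑' k : ℕ, ((n : ℝ) + 1 + k) *
      (s ^ (n + 1 + 2 * k) / ((k.factorial : ℝ) * ((n + 1 + k).factorial : ℝ))) := by
    rw [bes, ← tsum_mul_left]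
    congr 1; ext k
    rw [show n + 1 + k = (n + k) + 1 by ring, Nat.factorial_succ]
    push_cast
    have : (n : ℝ) + k + 1 ≠ 0 := by positivity
    field_simp
    ring
  have S1 : Summable fun k : ℕ => ((n : ℝ) + 1 + k) *
      (s ^ (n + 1 + 2 * k) / ((k.factorial : ℝ) * ((n + 1 + k).factorial : ℝ))) := by
    refine ((bes_summable s hs n).mul_left s).congr fun k => ?_
    rw [show n + 1 + k = (n + k) + 1 by ring, Nat.factorial_succ]
    push_cast
    have : (n : ℝ) + k + 1 ≠ 0 := by positivity
    field_simp
    ring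
  have t2 : ∀ k : ℕ,
      s * (s ^ (n + 2 + 2 * k) / ((k.factorial : ℝ) * ((n + 2 + k).factorial : ℝ)))
      = ((k + 1 : ℕ) : ℝ) * (s ^ (n + 1 + 2 * (k + 1)) /
        (((k + 1).factorial : ℝ) * ((n + 1 + (k + 1)).factorial : ℝ))) := by
    intro k
    rw [show n + 1 + (k + 1) = n + 2 + k by ring, Nat.factorial_succ k]
    push_cast
    have : (k : ℝ) + 1 ≠ 0 := by positivity
    field_simp
    ring
  have S2 : Summable fun k : ℕ => (k : ℝ) *
      (s ^ (n + 1 + 2 * k) / ((k.factorial : ℝ) * ((n + 1 + k).factorial : ℝ))) :=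
    (summable_nat_add_iff 1).1 (((bes_summable s hs (n + 2)).mul_left s).congr t2)
  have e2 : s * bes s (n + 2) = ∑' k : ℕ, (k : ℝ) *
      (s ^ (n + 1 + 2 * k) / ((k.factorial : ℝ) * ((n + 1 + k).factorial : ℝ))) := by
    rw [S2.tsum_eq_zero_add, bes, ← tsum_mul_left]
    simp only [t2]
    simp
  rw [mul_sub, e1, e2, ← S1.tsum_sub S2, bes, ← tsum_mul_left]
  congr 1; ext k; ring

lemma besselI_nat (s : ℝ) (n : ℕ) : besselI n (2 * s) = bes s n := by
  unfold besselI bes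
  congr 1; ext k
  rw [show 2 * s / 2 = s by ring, show (n : ℝ) + 2 * (k : ℝ) = ((n + 2 * k : ℕ) : ℝ) by push_cast; ring,
    Real.rpow_natCast, show (n : ℝ) + k + 1 = ((n + k : ℕ) : ℝ) + 1 by push_cast; ring,
    Real.Gamma_nat_eq_factorial]

lemma besselI_neg_nat (s : ℝ) (n : ℕ) : besselI (-n) (2 * s) = bes s n := by
  unfold besselI bes
  have hinj : Function.Injective fun k : ℕ => k + n := add_left_injective n
  rw [← hinj.tsum_eq]
  · congr 1; ext k
    rw [show 2 * s / 2 = s by ring,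
      show -(n : ℝ) + 2 * ((k + n : ℕ) : ℝ) = ((n + 2 * k : ℕ) : ℝ) by push_cast; ring,
      Real.rpow_natCast, show -(n : ℝ) + ((k + n : ℕ) : ℝ) + 1 = (k : ℝ) + 1 by push_cast; ring,
      Real.Gamma_nat_eq_factorial, add_comm k n, mul_comm ((n + k).factorial : ℝ)]
  · intro k hk
    by_contra hk'
    have hlt : k < n := by
      by_contra h
      exact hk' ⟨k - n, by simp; omega⟩
    apply hk
    -- `1/Γ` vanishes at nonpositive integers; here because `Gamma` is `0` there by convention
    -- and `x / 0 = 0`.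
    have : Real.Gamma (-(n : ℝ) + k + 1) = 0 := by
      rw [show -(n : ℝ) + k + 1 = -((n - 1 - k : ℕ) : ℝ) by
        rw [Nat.sub_sub, Nat.cast_sub (by omega)]; push_cast; ring]
      exact Real.Gamma_neg_nat_eq_zero _
    simp [this]

lemma besselI_int_neg (s : ℝ) (k : ℤ) :
    besselI ((-k : ℤ) : ℝ) (2 * s) = besselI (k : ℝ) (2 * s) := by
  obtain ⟨n, rfl | rfl⟩ := k.eq_nat_or_neg
  · push_cast; rw [besselI_nat s, besselI_neg_nat s]
  · push_cast; rw [neg_neg, besselI_nat s, besselI_neg_nat s]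

lemma besselI_int_rec (s : ℝ) (hs : 0 < s) (k : ℤ) :
    (k : ℝ) * besselI (k : ℝ) (2 * s) =
      s * (besselI ((k - 1 : ℤ) : ℝ) (2 * s) - besselI ((k + 1 : ℤ) : ℝ) (2 * s)) := by
  have main : ∀ n : ℕ, ((n : ℤ) : ℝ) * besselI ((n : ℤ) : ℝ) (2 * s) =
      s * (besselI (((n : ℤ) - 1 : ℤ) : ℝ) (2 * s) -
        besselI (((n : ℤ) + 1 : ℤ) : ℝ) (2 * s)) := by
    intro n
    cases n with
    | zero => rw [← besselI_int_neg s (((0 : ℕ) : ℤ) + 1)]; simp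
    | succ n =>
      have h := bes_rec s hs n
      rw [← besselI_nat s, ← besselI_nat s, ← besselI_nat s] at h
      push_cast at h ⊢
      rw [add_sub_cancel_right, add_assoc (n : ℝ) 1 1, one_add_one_eq_two]
      exact h
  obtain ⟨n, rfl | rfl⟩ := k.eq_nat_or_neg
  · exact main n
  · have h := main n
    rw [← besselI_int_neg s n, ← besselI_int_neg s ((n : ℤ) - 1),
      ← besselI_int_neg s ((n : ℤ) + 1), show -((n : ℤ) - 1) = -(n : ℤ) + 1 by ring,
      show -((n : ℤ) + 1) = -(n : ℤ) - 1 by ring] at h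
    push_cast at h ⊢
    linarith

/-! ### Moments of the Szegő polynomials -/

/-- The moments `a_n(j) = L(Φ_n z^{-j})` of the polynomials given by `Φ_0 = 1` and
`Φ_{n+1} = z Φ_n + r_{n+1} Φ_n^*`, for the functional `L(z^k) = c k` with `c` even. By evenness
the moments of the reversed polynomial `Φ_n^*` are `a_n(n - j)`, so the polynomials themselves need
not appear. -/
def szegoMoment (c : ℤ → ℝ) (r : ℕ → ℝ) : ℕ → ℤ → ℝ
  | 0, j => c j
  | n + 1, j => szegoMoment c r n (j - 1) + r (n + 1) * szegoMoment c r n (n - j)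

/-- The Lax equation in the spectral variable, in terms of moments. It passes from `n` to `n + 1`
because `r` satisfies discrete Painlevé II. -/
lemma szegoMoment_lax (c : ℤ → ℝ) (r : ℕ → ℝ) (s : ℝ)
    (hsymm : ∀ k, c (-k) = c k)
    (hc : ∀ k : ℤ, (k : ℝ) * c k = s * (c (k - 1) - c (k + 1)))
    (hr0 : r 0 = 1)
    (hr : ∀ n : ℕ, s * (1 - r (n + 1) ^ 2) * (r (n + 2) + r n) = -((n : ℝ) + 1) * r (n + 1))
    (n : ℕ) : ∀ j : ℤ, (j : ℝ) * szegoMoment c r n j =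
      s * szegoMoment c r n (j - 1) + (n - s * r n * r (n + 1)) * szegoMoment c r n j
        + s * r (n + 1) * szegoMoment c r n (n - j) - s * r n * szegoMoment c r n (n - j - 1) := by
  induction n with
  | zero =>
    intro j
    simp only [szegoMoment, Nat.cast_zero, zero_sub, hr0]
    rw [hsymm, hc, show -j - 1 = -(j + 1) by ring, hsymm]
    push_cast
    ring
  | succ n ih =>
    intro j
    -- The relation for `n` is used for both summands of `a_{n+1}(j) = a_n(j-1) + r_{n+1} a_n(n-j)`.
    have h1 := ih (j - 1)
    have h2 := ih (n - j)
    simp only [szegoMoment]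
    rw [show (n : ℤ) - (j - 1) = n - j + 1 by ring] at *
    rw [show (n : ℤ) - j + 1 - 1 = n - j by ring] at *
    rw [show (n : ℤ) - (n - j) = j by ring] at *
    rw [show ((n + 1 : ℕ) : ℤ) - j - 1 = n - j by push_cast; ring,
      show ((n + 1 : ℕ) : ℤ) - j = n - j + 1 by push_cast; ring,
      show (n : ℤ) - (n - j + 1) = j - 1 by ring,
      show (n : ℤ) - (n - j) = j by ring]
    push_cast at h1 h2 ⊢
    linear_combination h1 - r (n + 1) * h2 - szegoMoment c r n (n - j) * hr n

/-- `Φ_n` is orthogonal to `1, …, z^{n-1}`, and its norms `h_n = L(Φ_n z^{-n})` satisfy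
`h_{n+1} = (1 - r_{n+1}²) h_n`. -/
lemma szegoMoment_orthogonal (c : ℤ → ℝ) (r : ℕ → ℝ) (s : ℝ) (hs : s ≠ 0)
    (hsymm : ∀ k, c (-k) = c k)
    (hc : ∀ k : ℤ, (k : ℝ) * c k = s * (c (k - 1) - c (k + 1)))
    (hr0 : r 0 = 1) (hr1 : c 1 + r 1 * c 0 = 0)
    (hr : ∀ n : ℕ, s * (1 - r (n + 1) ^ 2) * (r (n + 2) + r n) = -((n : ℝ) + 1) * r (n + 1))
    (n : ℕ) : (∀ j : ℤ, 0 ≤ j → j < n → szegoMoment c r n j = 0) ∧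
      szegoMoment c r (n + 1) (n + 1) = (1 - r (n + 1) ^ 2) * szegoMoment c r n n := by
  -- `a_{n+1}(0) = 0` is the only part of the next orthogonality that needs the Lax equation.
  have key : ∀ n : ℕ, (∀ j : ℤ, 0 ≤ j → j < n → szegoMoment c r n j = 0) →
      szegoMoment c r n (-1) + r (n + 1) * szegoMoment c r n n = 0 := by
    intro n hn
    cases n with
    | zero => simpa [szegoMoment, hsymm] using hr1
    | succ n =>
      have h := szegoMoment_lax c r s hsymm hc hr0 hr (n + 1) 0
      rw [hn 0 le_rfl (by positivity), hn (((n + 1 : ℕ) : ℤ) - 0 - 1) (by push_cast; omega)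
        (by push_cast; omega), sub_zero, zero_sub] at h
      apply mul_left_cancel₀ hs
      linear_combination -h
  have orth : ∀ n : ℕ, ∀ j : ℤ, 0 ≤ j → j < n → szegoMoment c r n j = 0 := by
    intro n
    induction n with
    | zero => intro j h0 h1; simp at h1; omega
    | succ n ih =>
      intro j h0 h1
      push_cast at h1
      rcases h0.eq_or_lt with rfl | hj
      · simpa [szegoMoment] using key n ih
      · rw [szegoMoment, ih (j - 1) (by omega) (by omega), ih (n - j) (by omega) (by omega)]
        ring
  refine ⟨orth n, ?_⟩
  have h := key n (orth n)
  rw [szegoMoment, show (n : ℤ) + 1 - 1 = n by ring, show (n : ℤ) - (n + 1) = -1 by ring]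
  linear_combination r (n + 1) * h

/-- The `p k` are the coefficients of the monic polynomial `Φ_n`. -/
lemma szegoMoment_eq_sum (c : ℤ → ℝ) (r : ℕ → ℝ) (hsymm : ∀ k, c (-k) = c k) (n : ℕ) :
    ∃ p : ℕ → ℝ, p n = 1 ∧
      ∀ j : ℤ, szegoMoment c r n j = ∑ k ∈ range (n + 1), c (j - k) * p k := by
  induction n with
  | zero => exact ⟨fun _ => 1, rfl, fun j => by simp [szegoMoment]⟩
  | succ n ih =>
    obtain ⟨p, hp, h⟩ := ih
    refine ⟨fun k => (if k = 0 then 0 else p (k - 1)) +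
      (if k ≤ n then r (n + 1) * p (n - k) else 0), by simp [hp], fun j => ?_⟩
    rw [szegoMoment, h, h]
    simp only [mul_add, sum_add_distrib]
    congr 1
    · rw [sum_range_succ' _ (n + 1)]
      simp only [Nat.add_eq_zero_iff, one_ne_zero, and_false, if_false, Nat.add_sub_cancel,
        if_true, mul_zero, add_zero]
      refine sum_congr rfl fun k _ => ?_
      congr 2; push_cast; ring
    · rw [sum_range_succ _ (n + 1), if_neg (by omega), mul_zero, add_zero, mul_sum,
        ← sum_range_reflect]
      refine sum_congr rfl fun k hk => ?_
      have hk' : k ≤ n := by simpa [Nat.lt_succ_iff] using hk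
      rw [if_pos hk', show n + 1 - 1 - k = n - k by omega, ← hsymm, Nat.cast_sub hk',
        show -((n : ℤ) - j - (n - k)) = j - k by ring]
      ring

/-! ### Toeplitz determinants -/

/-- The Toeplitz determinant `det (c (j - k))` of size `n`. -/
noncomputable def toep (c : ℤ → ℝ) (n : ℕ) : ℝ :=
  Matrix.det (Matrix.of fun j k : Fin n => c ((j : ℕ) - (k : ℕ)))

/-- Cramer's rule for the last coefficient, `1`, of the solution of `T x = h e_n` given by `Φ_n`. -/
lemma tau_succ (c : ℤ → ℝ) (r : ℕ → ℝ) (hsymm : ∀ k, c (-k) = c k) (n : ℕ)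
    (hn : ∀ j : ℤ, 0 ≤ j → j < n → szegoMoment c r n j = 0) :
    toep c (n + 1) = szegoMoment c r n n * toep c n := by
  obtain ⟨p, hp, h⟩ := szegoMoment_eq_sum c r hsymm n
  set T : Matrix (Fin (n + 1)) (Fin (n + 1)) ℝ := Matrix.of fun j k => c ((j : ℕ) - (k : ℕ)) with hT
  have hTp : T.mulVec (fun k => p k) = Pi.single (Fin.last n) (szegoMoment c r n n) := by
    ext j
    have e : T.mulVec (fun k => p k) j = szegoMoment c r n (j : ℕ) := by
      rw [h, sum_range]; rfl
    rw [e]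
    refine Fin.lastCases ?_ (fun i => ?_) j
    · simp
    · rw [Pi.single_eq_of_ne (Fin.castSucc_lt_last i).ne]
      exact hn _ (by positivity) (by simp)
  have h2 : T.det • (fun k : Fin (n + 1) => p k) =
      T.adjugate.mulVec (Pi.single (Fin.last n) (szegoMoment c r n n)) := by
    rw [← hTp, Matrix.mulVec_mulVec, Matrix.adjugate_mul, Matrix.smul_mulVec, Matrix.one_mulVec]
  have h3 := congrFun h2 (Fin.last n)
  simp only [Pi.smul_apply, Fin.val_last, hp, smul_eq_mul, mul_one, Matrix.mulVec_single] at h3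
  have h4 : (T.submatrix Fin.castSucc Fin.castSucc).det = toep c n := by
    unfold toep; congr 1
  change T.det = _
  rw [h3]
  simp [Matrix.adjugate_fin_succ_eq_det_submatrix, h4, mul_comm]

lemma tauIII_eq_toep (t : ℝ) (n : ℕ) :
    tauIII n (4 * t) 0 = toep (fun k => besselI (k : ℝ) (2 * Real.sqrt t)) n := by
  have : Real.sqrt (4 * t) = 2 * Real.sqrt t := by
    rw [Real.sqrt_mul (by norm_num), show (4 : ℝ) = 2 ^ 2 by norm_num,
      Real.sqrt_sq (by norm_num)]
  simp [tauIII, toep, this]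

theorem stmt_6 (t : ℝ) (ht : 0 < t) (P : ℕ → ℝ)
    (hP0 : P 0 = 1)
    (hP1 : P 1 = besselI 1 (2 * Real.sqrt t) / besselI 0 (2 * Real.sqrt t))
    (hPne : ∀ n : ℕ, 1 ≤ n → 1 - P n ^ 2 ≠ 0)
    (hPrec : ∀ n : ℕ, 1 ≤ n →
      P (n + 1) + P (n - 1) = (n : ℝ) * P n / (Real.sqrt t * (1 - P n ^ 2))) :
    ∀ N : ℕ, 1 ≤ N → tauIII N (4 * t) 0 ≠ 0 →
      1 - P N ^ 2 =
        tauIII (N + 1) (4 * t) 0 * tauIII (N - 1) (4 * t) 0 / (tauIII N (4 * t) 0) ^ 2 := by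
  intro N hN hτ
  have hs : 0 < Real.sqrt t := Real.sqrt_pos.2 ht
  simp only [tauIII_eq_toep] at hτ ⊢
  set s := Real.sqrt t
  set c : ℤ → ℝ := fun k => besselI (k : ℝ) (2 * s) with hcdef
  have hsymm : ∀ k, c (-k) = c k := besselI_int_neg s
  have hc0 : besselI 0 (2 * s) ≠ 0 := by
    have := besselI_nat s 0
    rw [Nat.cast_zero] at this
    rw [this]; exact (bes_zero_pos s hs).ne'
  set r : ℕ → ℝ := fun n => (-1) ^ n * P n with hrdef
  have hr2 : ∀ n, r n ^ 2 = P n ^ 2 := fun n => by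
    simp only [hrdef]; rw [mul_pow, ← pow_mul, mul_comm n 2, pow_mul]; simp
  have hr1 : c 1 + r 1 * c 0 = 0 := by
    simp only [hrdef, hcdef, hP1, Int.cast_one, Int.cast_zero]
    field_simp
    ring
  have hr : ∀ n : ℕ,
      s * (1 - r (n + 1) ^ 2) * (r (n + 2) + r n) = -((n : ℝ) + 1) * r (n + 1) := by
    intro n
    have h := hPrec (n + 1) (by omega)
    have hne := hPne (n + 1) (by omega)
    rw [eq_div_iff (mul_ne_zero hs.ne' hne)] at h
    simp only [Nat.add_sub_cancel] at h
    push_cast at h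
    rw [hr2]
    simp only [hrdef, pow_succ]
    linear_combination (-1) ^ n * h
  have hO := szegoMoment_orthogonal c r s hs.ne' hsymm (besselI_int_rec s hs) (by simp [hrdef, hP0])
    hr1 hr
  obtain ⟨n, rfl⟩ : ∃ n, N = n + 1 := ⟨N - 1, by omega⟩
  have d1 := tau_succ c r hsymm n (hO n).1
  have d2 := tau_succ c r hsymm (n + 1) (hO (n + 1)).1
  have h := (hO n).2
  rw [hr2] at h
  rw [Nat.add_sub_cancel, eq_div_iff (pow_ne_zero 2 hτ), d2, Nat.cast_succ, h, d1]
  ring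
end

section
/- Let a, b ∈ ℂ with Re(a+b) > −1. Then (1/2π) ∫_{−π}^{π} e^{iθ(a−b)/2} (2 + 2cos θ)^{(a+b)/2} dθ = Γ(a+b+1) / ( Γ(a+1) · Γ(b+1) ), where (2+2cos θ)^{(a+b)/2} = |1 + e^{iθ}|^{a+b} is defined via the principal power of the nonnegative real number 2+2cos θ. -/
open MeasureTheory

/-!
On `(-π, π)` one has `2 + 2 cos θ = (2 cos (θ/2))²` with `2 cos (θ/2) > 0`, so the integrand is
`W a b θ = e^{iθ(a-b)/2} (2 cos (θ/2))^{a+b}`, that is `(1 + e^{iθ})^a (1 + e^{-iθ})^b`. Let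
`J a b` be its integral over `[-π, π]`. The proof compares `J` with `2π Γ(a+b+1)/(Γ(a+1)Γ(b+1))`
by showing that both satisfy the same recurrence and have the same growth.

* Recurrence (`J_rec`): integrating `d/dθ W (a+1) b` over `[-π, π]`, where `W (a+1) b` vanishes at
  both ends, gives `(a+1) J (a+1) b = (a+b+1) J a b`. Since `J` is symmetric in `a` and `b`, the
  same holds in `b`.
* Growth: `W (a+n) (b+n) = (2 + 2 cos θ)^n W a b`, and the weight `(2 + 2 cos θ)^n` concentrates at
  `θ = 0`, so `J (a+n) (b+n) / J n n → W a b 0 = 2^(a+b)` (`J_peak`). Euler's limit formula for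
  `Γ` (`Gamma_asymp`) shows that the Gamma quotients have the same limiting ratio, which gives the
  formula when `a` and `b` have positive real part (`J_of_re_pos`).
* The recurrence, read downwards, extends the formula to all `a, b` with `Re (a+b) > -1`
  (`J_descend`, `J_formula`). There `a+b+1 ≠ 0`, and the relation `1/Γ(s) = s/Γ(s+1)` is valid at
  the poles too, with Mathlib's convention `1/Γ = 0` there.
-/

open Filter Topology

/-- The integrand `e^{iθ(a-b)/2} (2 cos (θ/2))^{a+b}`, which is `(1 + e^{iθ})^a (1 + e^{-iθ})^b` for
`-π < θ < π`. The base of the power is nonnegative for `-π ≤ θ ≤ π`, the only range used. -/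
noncomputable def W (a b : ℂ) (θ : ℝ) : ℂ :=
  Complex.exp (Complex.I * θ * (a - b) / 2) * ((2 * Real.cos (θ / 2) : ℝ) : ℂ) ^ (a + b)

/-- The integral of `W a b` over `[-π, π]`, without the factor `1/(2π)`. -/
noncomputable def J (a b : ℂ) : ℂ := ∫ θ in (-Real.pi)..Real.pi, W a b θ

lemma two_cos_pos {θ : ℝ} (h : θ ∈ Set.Ioo (-Real.pi) Real.pi) : 0 < 2 * Real.cos (θ / 2) := by
  have := Real.cos_pos_of_mem_Ioo (x := θ / 2) ⟨by linarith [h.1], by linarith [h.2]⟩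
  linarith

lemma two_cos_nonneg {θ : ℝ} (h : θ ∈ Set.Icc (-Real.pi) Real.pi) :
    0 ≤ 2 * Real.cos (θ / 2) := by
  have := Real.cos_nonneg_of_mem_Icc (x := θ / 2) ⟨by linarith [h.1], by linarith [h.2]⟩
  linarith

lemma two_add_two_cos (θ : ℝ) : 2 + 2 * Real.cos θ = (2 * Real.cos (θ / 2)) ^ 2 := by
  have := Real.cos_sq (θ / 2)
  rw [mul_div_cancel₀ θ (two_ne_zero)] at this
  rw [mul_pow, this]; ring

lemma sq_cpow_half {x : ℝ} (hx : 0 ≤ x) (s : ℂ) :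
    ((x ^ 2 : ℝ) : ℂ) ^ (s / 2) = (x : ℂ) ^ s := by
  have h : (x : ℂ).arg = 0 := Complex.arg_ofReal_of_nonneg hx
  have := Complex.cpow_ofNat_mul' (x := (x : ℂ)) (n := 2) (by simp [h, Real.pi_pos])
    (by simp [h, Real.pi_pos.le]) (s / 2)
  rw [mul_div_cancel₀ s (two_ne_zero)] at this
  rw [this, Complex.ofReal_pow]

/-- For a nonpositive real part of the exponent, the singularities at `±π` are controlled by Jordan's
inequality `2 cos (θ/2) ≥ (2/π) (π - |θ|)`. -/
lemma integrable_cpow {s : ℂ} (hs : -1 < s.re) :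
    IntervalIntegrable (fun θ : ℝ => ((2 * Real.cos (θ / 2) : ℝ) : ℂ) ^ s) volume
      (-Real.pi) Real.pi := by
  rcases lt_or_ge 0 s.re with h | h
  · exact ((Complex.continuous_ofReal_cpow_const h).comp
      (by fun_prop : Continuous fun θ : ℝ => 2 * Real.cos (θ / 2))).intervalIntegrable _ _
  have hpi := Real.pi_pos
  have h0 : IntervalIntegrable (fun x : ℝ => x ^ s.re) volume 0 (2 * Real.pi) :=
    intervalIntegral.intervalIntegrable_rpow' hs
  have h1 : IntervalIntegrable (fun θ : ℝ => (Real.pi - θ) ^ s.re) volume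
      (-Real.pi) Real.pi := by
    have := (h0.comp_sub_left Real.pi).symm
    convert this using 1 <;> ring
  have h2 : IntervalIntegrable (fun θ : ℝ => (Real.pi + θ) ^ s.re) volume
      (-Real.pi) Real.pi := by
    have := (h0.comp_add_left Real.pi)
    convert this using 1 <;> ring
  refine ((h1.add h2).const_mul ((2 / Real.pi) ^ s.re)).mono_fun' ?_ ?_
  · exact (by fun_prop : Measurable fun θ : ℝ =>
      ((2 * Real.cos (θ / 2) : ℝ) : ℂ) ^ s).aestronglyMeasurable
  · rw [Set.uIoc_of_le (by linarith), ← restrict_Ioo_eq_restrict_Ioc]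
    filter_upwards [ae_restrict_mem measurableSet_Ioo] with θ hθ
    have ha : 0 < Real.pi - θ := by linarith [hθ.2]
    have hb : 0 < Real.pi + θ := by linarith [hθ.1]
    rw [Complex.norm_cpow_eq_rpow_re_of_pos (two_cos_pos hθ)]
    simp only [mul_add]
    rw [← Real.mul_rpow (by positivity) ha.le, ← Real.mul_rpow (by positivity) hb.le]
    have key : ∀ t : ℝ, 0 ≤ t → t < Real.pi → (2 * Real.cos (t / 2)) ^ s.re ≤
        (2 / Real.pi * (Real.pi - t)) ^ s.re := by
      intro t ht ht'
      have hc := Real.one_sub_mul_le_cos (x := t / 2) (by linarith) (by linarith)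
      refine Real.rpow_le_rpow_of_nonpos (mul_pos (by positivity) (by linarith)) ?_ h
      have : 2 / Real.pi * (Real.pi - t) = 2 * (1 - 2 / Real.pi * (t / 2)) := by
        field_simp
      linarith
    have pa : 0 ≤ (2 / Real.pi * (Real.pi - θ)) ^ s.re := by positivity
    have pb : 0 ≤ (2 / Real.pi * (Real.pi + θ)) ^ s.re := by positivity
    rcases le_total 0 θ with h0 | h0
    · linarith [key θ h0 hθ.2]
    · have := key (-θ) (by linarith) (by linarith [hθ.1])
      rw [neg_div, Real.cos_neg, sub_neg_eq_add] at this
      linarith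

lemma W_integrable {a b : ℂ} (h : -1 < (a + b).re) :
    IntervalIntegrable (W a b) volume (-Real.pi) Real.pi :=
  (integrable_cpow h).continuousOn_mul (by fun_prop)

lemma J_symm (a b : ℂ) : J a b = J b a := by
  unfold J
  have := intervalIntegral.integral_comp_neg (a := -Real.pi) (b := Real.pi) (W a b)
  rw [neg_neg] at this
  rw [← this]
  congr 1
  ext θ
  simp only [W, neg_div, Real.cos_neg, add_comm a b]
  congr 2
  push_cast
  ring

lemma W_hasDeriv (a b : ℂ) {θ : ℝ} (hθ : θ ∈ Set.Ioo (-Real.pi) Real.pi) :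
    HasDerivAt (W (a + 1) b)
      (Complex.I * ((a + 1) * W (a + 1) b θ - (a + b + 1) * W a b θ)) θ := by
  have hc := two_cos_pos hθ
  have hc' : ((2 * Real.cos (θ / 2) : ℝ) : ℂ) ≠ 0 := by exact_mod_cast hc.ne'
  have d1 : HasDerivAt (fun θ : ℝ => Complex.exp (Complex.I * θ * (a + 1 - b) / 2))
      (Complex.exp (Complex.I * θ * (a + 1 - b) / 2) * (Complex.I * 1 * (a + 1 - b) / 2)) θ := by
    refine HasDerivAt.cexp ?_
    exact ((((hasDerivAt_id θ).ofReal_comp).const_mul Complex.I).mul_const _).div_const _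
  have d2 : HasDerivAt (fun θ : ℝ => ((2 * Real.cos (θ / 2) : ℝ) : ℂ))
      ((2 * (-Real.sin (θ / 2) * (1 / 2)) : ℝ) : ℂ) θ :=
    ((((hasDerivAt_id θ).div_const 2).cos).const_mul 2).ofReal_comp
  have d3 := d1.mul ((Complex.hasStrictDerivAt_cpow_const (c := a + 1 + b)
    (Complex.ofReal_mem_slitPlane.2 hc)).hasDerivAt.comp θ d2)
  refine d3.congr_deriv ?_
  have e1 : a + 1 + b - 1 = a + b := by ring
  have e2 : a + 1 + b = a + b + 1 := by ring
  simp only [W, Function.comp_apply]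
  rw [e1, e2, Complex.cpow_add (a + b) 1 hc', Complex.cpow_one]
  -- The half-angle factor `e^{iθ/2}` distinguishes the exponentials of `W (a + 1) b` and `W a b`.
  have e3 : Complex.exp (Complex.I * θ * (a + 1 - b) / 2) =
      Complex.exp (Complex.I * θ * (a - b) / 2) *
        (Complex.cos (θ / 2) + Complex.sin (θ / 2) * Complex.I) := by
    rw [← Complex.exp_mul_I, ← Complex.exp_add]
    congr 1; ring
  rw [e3]
  push_cast
  generalize Complex.exp (Complex.I * θ * (a - b) / 2) = E
  generalize (2 * Complex.cos (θ / 2)) ^ (a + b) = P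
  have hcs := Complex.cos_sq_add_sin_sq (θ / 2)
  set c := Complex.cos (θ / 2)
  set s := Complex.sin (θ / 2)
  linear_combination (-Complex.I * (a + b + 1) * E * P) * hcs
    - (a + b + 1) * s * c * E * P * Complex.I_sq

/-- The recurrence obtained by integrating the derivative of `W (a + 1) b`, whose boundary values
vanish because `Re (a + 1 + b) > 0`. -/
lemma J_rec {a b : ℂ} (h : -1 < (a + b).re) :
    (a + 1) * J (a + 1) b = (a + b + 1) * J a b := by
  have h' : -1 < (a + 1 + b).re := by simp at h ⊢; linarith
  have hpos : 0 < (a + 1 + b).re := by simp at h ⊢; linarith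
  have hpi := Real.pi_pos
  have i1 := (W_integrable h').const_mul (a + 1)
  have i2 := (W_integrable h).const_mul (a + b + 1)
  have ftc := intervalIntegral.integral_eq_sub_of_hasDerivAt_of_le (f := W (a + 1) b)
    (f' := fun θ => Complex.I * ((a + 1) * W (a + 1) b θ - (a + b + 1) * W a b θ))
    (a := -Real.pi) (b := Real.pi) (by linarith) ?_ (fun θ hθ => W_hasDeriv a b hθ)
    ((i1.sub i2).const_mul _)
  · rw [intervalIntegral.integral_const_mul, intervalIntegral.integral_sub i1 i2,
      intervalIntegral.integral_const_mul, intervalIntegral.integral_const_mul] at ftc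
    have z : a + 1 + b ≠ 0 := fun h0 => by rw [h0] at hpos; simp at hpos
    have z1 : W (a + 1) b Real.pi = 0 := by simp [W, z]
    have z2 : W (a + 1) b (-Real.pi) = 0 := by simp [W, z, neg_div]
    rw [z1, z2, sub_zero, mul_eq_zero, or_iff_right Complex.I_ne_zero] at ftc
    exact sub_eq_zero.1 ftc
  · refine Continuous.continuousOn (Continuous.mul (by fun_prop) ?_)
    exact (Complex.continuous_ofReal_cpow_const hpos).comp
      (by fun_prop : Continuous fun θ : ℝ => 2 * Real.cos (θ / 2))

/-- Iterating the recurrence in both arguments: `J` and the Gamma quotient grow by the same factor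
from `(a, b)` to `(a + n, b + n)`. -/
lemma J_ratio {a b : ℂ} (ha : 0 ≤ a.re) (hb : 0 ≤ b.re) (n : ℕ) :
    J (a + n) (b + n) * Complex.Gamma (a + n + 1) * Complex.Gamma (b + n + 1) *
        Complex.Gamma (a + b + 1) =
      J a b * Complex.Gamma (a + 1) * Complex.Gamma (b + 1) *
        Complex.Gamma (a + b + (2 * n : ℕ) + 1) := by
  induction n with
  | zero => simp
  | succ n ih =>
    have hn : (0 : ℝ) ≤ n := n.cast_nonneg
    have nz : ∀ z : ℂ, 0 < z.re → z ≠ 0 := fun z hz h0 => by simp [h0] at hz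
    have r1 := J_rec (a := a + n) (b := b + n) (by simp; linarith)
    have r2 := J_rec (a := b + n) (b := a + n + 1) (by simp; linarith)
    rw [J_symm (b + n + 1), J_symm (b + n)] at r2
    have g1 := Complex.Gamma_add_one (a + n + 1) (nz _ (by simp; linarith))
    have g2 := Complex.Gamma_add_one (b + n + 1) (nz _ (by simp; linarith))
    have g3 := Complex.Gamma_add_one (a + b + 2 * n + 1) (nz _ (by simp; linarith))
    have g4 := Complex.Gamma_add_one (a + b + 2 * n + 1 + 1) (nz _ (by simp; linarith))
    push_cast at ih ⊢
    rw [show a + (n + 1 : ℂ) = a + n + 1 by ring, show b + (n + 1 : ℂ) = b + n + 1 by ring,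
      show a + b + 2 * (n + 1 : ℂ) + 1 = a + b + 2 * n + 1 + 1 + 1 by ring, g1, g2, g4, g3]
    linear_combination ((a + n + 1) * Complex.Gamma (a + n + 1) * Complex.Gamma (b + n + 1) *
        Complex.Gamma (a + b + 1)) * r2 +
      ((a + b + 2 * n + 1 + 1) * Complex.Gamma (a + n + 1) * Complex.Gamma (b + n + 1) *
        Complex.Gamma (a + b + 1)) * r1 +
      (a + b + 2 * n + 1 + 1) * (a + b + 2 * n + 1) * ih

lemma J_zero : J 0 0 = 2 * Real.pi := by
  simp [J, W]
  ring

lemma W_add_nat (a b : ℂ) (n : ℕ) {θ : ℝ} (hθ : θ ∈ Set.Ioo (-Real.pi) Real.pi) :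
    W (a + n) (b + n) θ = (2 + 2 * Real.cos θ) ^ n • W a b θ := by
  have hc := two_cos_pos hθ
  have hc' : ((2 * Real.cos (θ / 2) : ℝ) : ℂ) ≠ 0 := by exact_mod_cast hc.ne'
  have e : a + n + (b + n) = a + b + (2 * n : ℕ) := by push_cast; ring
  rw [two_add_two_cos, W, W, e, Complex.cpow_add _ _ hc', Complex.cpow_natCast, pow_mul,
    Complex.real_smul, add_sub_add_right_eq_sub, Complex.ofReal_pow, Complex.ofReal_pow]
  ring

lemma J_eq_setIntegral (a b : ℂ) : J a b = ∫ θ in Set.Ioo (-Real.pi) Real.pi, W a b θ := by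
  rw [J, intervalIntegral.integral_of_le (by linarith [Real.pi_pos]), integral_Ioc_eq_integral_Ioo]

/-- The weights `(2 + 2 cos θ)^n`, normalised by their integral `J n n`, concentrate at `θ = 0`, where
`W a b` takes the value `2^(a+b)`. -/
lemma J_peak {a b : ℂ} (h : -1 < (a + b).re) :
    Tendsto (fun n : ℕ => (J n n)⁻¹ * J (a + n) (b + n)) atTop (𝓝 (2 ^ (a + b))) := by
  have hpi := Real.pi_pos
  have key := tendsto_setIntegral_pow_smul_of_unique_maximum_of_isCompact_of_integrableOn
    (μ := volume) (s := Set.Icc (-Real.pi) Real.pi) (x₀ := (0 : ℝ)) (g := W a b)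
    (c := fun θ => 2 + 2 * Real.cos θ) isCompact_Icc (by fun_prop) ?_ ?_ (by norm_num) ?_ ?_ ?_
  · have e0 : W a b 0 = 2 ^ (a + b) := by simp [W]
    rw [e0] at key
    refine key.congr fun n => ?_
    have e1 : J (a + n) (b + n) =
        ∫ θ in Set.Icc (-Real.pi) Real.pi, (2 + 2 * Real.cos θ) ^ n • W a b θ := by
      rw [J_eq_setIntegral, integral_Icc_eq_integral_Ioo]
      exact setIntegral_congr_fun measurableSet_Ioo fun θ hθ => W_add_nat a b n hθ
    have e2 : J n n =
        ((∫ θ in Set.Icc (-Real.pi) Real.pi, (2 + 2 * Real.cos θ) ^ n : ℝ) : ℂ) := by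
      rw [J_eq_setIntegral, integral_Icc_eq_integral_Ioo, ← integral_complex_ofReal]
      refine setIntegral_congr_fun measurableSet_Ioo fun θ hθ => ?_
      have := W_add_nat 0 0 n hθ
      rw [zero_add] at this
      simp only [this]
      simp [W]
    rw [e1, e2, Complex.real_smul, Complex.ofReal_inv]
  · intro y hy hy0
    have : Real.cos y ≠ 1 := fun h1 =>
      hy0 ((Real.cos_eq_one_iff_of_lt_of_lt (by linarith [hy.1]) (by linarith [hy.2])).1 h1)
    have := lt_of_le_of_ne (Real.cos_le_one y) this
    simp; linarith
  · intro y _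
    linarith [Real.neg_one_le_cos y]
  · rw [interior_Icc]
    exact subset_closure ⟨by linarith, hpi⟩
  · exact (intervalIntegrable_iff_integrableOn_Icc_of_le (by linarith)).1 (W_integrable h)
  · refine ContinuousAt.continuousWithinAt (HasDerivAt.continuousAt (f' := Complex.I *
      ((a - 1 + 1) * W (a - 1 + 1) b 0 - (a - 1 + b + 1) * W (a - 1) b 0)) ?_)
    -- `W a b` is `W ((a - 1) + 1) b`, hence differentiable at `0`.
    have := W_hasDeriv (a - 1) b (θ := 0) ⟨by linarith, hpi⟩
    rwa [sub_add_cancel] at this ⊢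

/-- Euler's limit formula in the form `Γ(z+n+1) ~ n^z n!`. -/
lemma Gamma_asymp {z : ℂ} (hz : 0 < z.re) :
    Tendsto (fun n : ℕ => Complex.Gamma (z + n + 1) / ((n : ℂ) ^ z * n.factorial)) atTop (𝓝 1) := by
  have nz : ∀ w : ℂ, 0 < w.re → w ≠ 0 := fun w hw h0 => by simp [h0] at hw
  have hG : Complex.Gamma z ≠ 0 := Complex.Gamma_ne_zero_of_re_pos hz
  have h := ((Complex.GammaSeq_tendsto_Gamma z).inv₀ hG).const_mul (Complex.Gamma z)
  rw [mul_inv_cancel₀ hG] at h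
  refine h.congr fun n => ?_
  have hp : ∀ n : ℕ, Complex.Gamma (z + n + 1) =
      (∏ j ∈ Finset.range (n + 1), (z + j)) * Complex.Gamma z := by
    intro n
    induction n with
    | zero => simp [Complex.Gamma_add_one z (nz z hz)]
    | succ n ih =>
      have : 0 < (z + n + 1).re := by
        have : (0 : ℝ) ≤ n := n.cast_nonneg
        simp; linarith
      rw [Finset.prod_range_succ, mul_right_comm, ← ih]
      push_cast
      rw [← add_assoc, Complex.Gamma_add_one _ (nz _ this), mul_comm]
  rw [Complex.GammaSeq, inv_div, hp]
  ring

lemma J_of_re_pos {a b : ℂ} (ha : 0 < a.re) (hb : 0 < b.re) :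
    J a b = 2 * Real.pi * Complex.Gamma (a + b + 1) *
      ((Complex.Gamma (a + 1))⁻¹ * (Complex.Gamma (b + 1))⁻¹) := by
  have hab : 0 < (a + b).re := by simp; linarith
  -- Multiplying by the Gamma asymptotics, with `Γ(a+b+2n+1)` taken along the even integers.
  have L := J_peak (a := a) (b := b) (by linarith)
  have G := ((Gamma_asymp ha).mul (Gamma_asymp hb)).div
    ((Gamma_asymp hab).comp (tendsto_id.const_mul_atTop' (two_pos : (0 : ℕ) < 2))) one_ne_zero
  have T := L.mul G
  have pg : ∀ z : ℂ, 0 < z.re → Complex.Gamma z ≠ 0 := fun z => Complex.Gamma_ne_zero_of_re_pos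
  have ga := pg (a + 1) (by simp; linarith)
  have gb := pg (b + 1) (by simp; linarith)
  have gs := pg (a + b + 1) (by simp at hab ⊢; linarith)
  have h2 : (2 : ℂ) ^ (a + b) ≠ 0 := by simp
  have hpi : (Real.pi : ℂ) ≠ 0 := by exact_mod_cast Real.pi_ne_zero
  have T' : Tendsto (fun _ : ℕ => J a b * Complex.Gamma (a + 1) * Complex.Gamma (b + 1) /
      (2 * Real.pi * Complex.Gamma (a + b + 1)) * 2 ^ (a + b)) atTop
      (𝓝 (2 ^ (a + b) * (1 * 1 / 1))) := by
    refine T.congr' ?_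
    filter_upwards [eventually_ne_atTop 0] with n hn
    have hn' : (n : ℂ) ≠ 0 := by exact_mod_cast hn
    have r := J_ratio ha.le hb.le n
    have r0 := J_ratio (a := 0) (b := 0) le_rfl le_rfl n
    have gs' := pg (a + b + (2 * n : ℕ) + 1) (by
      have : (0 : ℝ) ≤ n := n.cast_nonneg
      simp at hab ⊢; linarith)
    simp only [zero_add, Complex.Gamma_one, J_zero, Complex.Gamma_nat_eq_factorial, mul_one] at r0
    have f1 : (n.factorial : ℂ) ≠ 0 := by exact_mod_cast n.factorial_ne_zero
    have f2 : ((2 * n).factorial : ℂ) ≠ 0 := by exact_mod_cast (2 * n).factorial_ne_zero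
    have hJ : J n n = 2 * Real.pi * (2 * n).factorial / (n.factorial * n.factorial) := by
      field_simp
      linear_combination r0
    have hp : ((2 * n : ℕ) : ℂ) ^ (a + b) = 2 ^ (a + b) * ((n : ℂ) ^ a * (n : ℂ) ^ b) := by
      rw [Nat.cast_mul, Complex.natCast_mul_natCast_cpow, Complex.cpow_add _ _ hn', Nat.cast_ofNat]
    have p1 : (n : ℂ) ^ a ≠ 0 := by simp [hn']
    have p2 : (n : ℂ) ^ b ≠ 0 := by simp [hn']
    simp only [Pi.div_apply, Function.comp, id]
    rw [hp, hJ]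
    field_simp
    linear_combination r
  -- The ratio of `J a b` to the claimed value, times `2^(a+b)`, is constant in `n`.
  have e := tendsto_nhds_unique T' tendsto_const_nhds
  field_simp at e ⊢
  linear_combination -e

/-- The recurrence carries the formula from `(a + 1, b)` down to `(a, b)`. -/
lemma J_descend {a b : ℂ} (h : -1 < (a + b).re)
    (H : J (a + 1) b = 2 * Real.pi * Complex.Gamma (a + 1 + b + 1) *
      ((Complex.Gamma (a + 1 + 1))⁻¹ * (Complex.Gamma (b + 1))⁻¹)) :
    J a b = 2 * Real.pi * Complex.Gamma (a + b + 1) *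
      ((Complex.Gamma (a + 1))⁻¹ * (Complex.Gamma (b + 1))⁻¹) := by
  have hs : a + b + 1 ≠ 0 := fun h0 => by
    have := congrArg Complex.re h0
    simp at this h; linarith
  have r := J_rec h
  rw [H, show a + 1 + b + 1 = a + b + 1 + 1 by ring, Complex.Gamma_add_one _ hs] at r
  rw [Complex.one_div_Gamma_eq_self_mul_one_div_Gamma_add_one (a + 1)]
  refine mul_left_cancel₀ hs ?_
  rw [← r]; ring

lemma J_formula_of_right {b : ℂ} (hb : 0 < b.re) (n : ℕ) : ∀ a : ℂ, -1 < (a + b).re →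
    0 < a.re + n → J a b = 2 * Real.pi * Complex.Gamma (a + b + 1) *
      ((Complex.Gamma (a + 1))⁻¹ * (Complex.Gamma (b + 1))⁻¹) := by
  induction n with
  | zero => exact fun a _ ha => J_of_re_pos (by simpa using ha) hb
  | succ n ih =>
    intro a h ha
    push_cast at ha
    exact J_descend h (ih (a + 1) (by simp at h ⊢; linarith) (by simp; linarith))

lemma J_formula (n : ℕ) : ∀ a b : ℂ, -1 < (a + b).re → 0 < b.re + n →
    J a b = 2 * Real.pi * Complex.Gamma (a + b + 1) *
      ((Complex.Gamma (a + 1))⁻¹ * (Complex.Gamma (b + 1))⁻¹) := by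
  induction n with
  | zero =>
    intro a b h hb
    obtain ⟨m, hm⟩ := exists_nat_gt (-a.re)
    exact J_formula_of_right (by simpa using hb) m a h (by linarith)
  | succ n ih =>
    intro a b h hb
    push_cast at hb
    have := ih a (b + 1) (by simp at h ⊢; linarith) (by simp; linarith)
    rw [J_symm, add_comm a b, mul_comm (Complex.Gamma (a + 1))⁻¹]
    refine J_descend (by rwa [add_comm]) ?_
    rw [J_symm, this, add_comm a (b + 1), mul_comm (Complex.Gamma (a + 1))⁻¹]

theorem stmt_9 (a b : ℂ) (h : -1 < (a + b).re) :
    (1 / (2 * (Real.pi : ℂ))) *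
      ∫ θ in Set.Icc (-Real.pi) Real.pi,
        Complex.exp (Complex.I * θ * (a - b) / 2) *
          (((2 + 2 * Real.cos θ : ℝ) : ℂ) ^ ((a + b) / 2))
      = Complex.Gamma (a + b + 1) / (Complex.Gamma (a + 1) * Complex.Gamma (b + 1)) := by
  have hJ : ∫ θ in Set.Icc (-Real.pi) Real.pi,
        Complex.exp (Complex.I * θ * (a - b) / 2) *
          (((2 + 2 * Real.cos θ : ℝ) : ℂ) ^ ((a + b) / 2)) = J a b := by
    rw [J_eq_setIntegral, ← integral_Icc_eq_integral_Ioo]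
    refine setIntegral_congr_fun measurableSet_Icc fun θ hθ => ?_
    simp only [W]
    rw [two_add_two_cos, sq_cpow_half (two_cos_nonneg hθ)]
  obtain ⟨n, hn⟩ := exists_nat_gt (-b.re)
  rw [hJ, J_formula n a b h (by linarith)]
  have hpi : (Real.pi : ℂ) ≠ 0 := by exact_mod_cast Real.pi_ne_zero
  rw [div_eq_mul_inv (Complex.Gamma (a + b + 1)), mul_inv]
  field_simp
end
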